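/- arXiv:2212.08289 — 2 statements merged into one kernel-verified Lean document; each statement's English description precedes it below -/
import Mathlib

section
/- Let μ > 0 and let p : [0,∞) → ℝ^ℕ be a solution of the mean-field ODE system d/dt p_n(t) = 𝓛[p(t)]_n with p(t) ∈ V_μ for all t ≥ 0 and E[p(0) − p*] < ∞. Assume that the series E[p(t) − p*] = ∑_{n≥0} (p_n(t) − p*_n)²/p*_n together with its first and second termwise-differentiated series in t converge uniformly on compact subsets of [0,∞). Then for every t ≥ 0, E[p(t) − p*] ≤ E[p(0) − p*]·e^{−t}; equivalently, the χ² distance χ²(p(t), p*) := ∑_{n≥0} (p_n(t) − p*_n)²/p*_n decays exponentially: χ²(p(t), p*) ≤ χ²(p(0), p*)·e^{−t}. -/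
open Filter

/-- The poor-biased generator: `𝓛[p]_0 = p_1 - μ p_0` and, for `n ≥ 1`,
`𝓛[p]_n = (n+1) p_{n+1} + μ p_{n-1} - (n+μ) p_n`. -/
noncomputable def gen (μ : ℝ) (p : ℕ → ℝ) : ℕ → ℝ
  | 0 => p 1 - μ * p 0
  | n + 1 => ((n : ℝ) + 2) * p (n + 2) + μ * p n - (((n : ℝ) + 1) + μ) * p (n + 1)

/-- `V_μ`: probability mass functions on `ℕ` with mean `μ`. -/
def memV (μ : ℝ) (p : ℕ → ℝ) : Prop :=
  (∀ n, 0 ≤ p n) ∧ (∑' n : ℕ, p n = 1) ∧ (∑' n : ℕ, (n : ℝ) * p n = μ)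

/-- The Poisson distribution with mean `μ`: `p*_n = μ^n e^{-μ} / n!`. -/
noncomputable def pstar (μ : ℝ) (n : ℕ) : ℝ := μ ^ n * Real.exp (-μ) / n.factorial

/-- The series `∑_n f n t` converges uniformly on compact subsets of `[0, ∞)`. -/
def UnifConvOnCompacts (f : ℕ → ℝ → ℝ) : Prop :=
  ∀ K : Set ℝ, K ⊆ Set.Ici 0 → IsCompact K →
    TendstoUniformlyOn (fun (m : ℕ) (t : ℝ) => ∑ n ∈ Finset.range m, f n t)
      (fun t => ∑' n : ℕ, f n t) atTop K

open Topology

lemma pstar_pos' {μ : ℝ} (hμ : 0 < μ) (n : ℕ) : 0 < pstar μ n := by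
  unfold pstar; positivity

lemma pstar_rec (μ : ℝ) (n : ℕ) : ((n : ℝ) + 1) * pstar μ (n + 1) = μ * pstar μ n := by
  unfold pstar
  rw [Nat.factorial_succ]
  push_cast
  have h1 : (n.factorial : ℝ) ≠ 0 := by positivity
  have h2 : (n : ℝ) + 1 ≠ 0 := by positivity
  field_simp
  ring

lemma pstar_add_le {μ : ℝ} (hμ : 0 < μ) (m k : ℕ) :
    pstar μ (k + m) ≤ pstar μ m * (μ ^ k / k.factorial) := by
  have h : (k.factorial : ℝ) * m.factorial ≤ (k + m).factorial := by
    exact_mod_cast Nat.le_of_dvd (Nat.factorial_pos _) (Nat.factorial_mul_factorial_dvd_factorial_add k m)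
  have h2 : (0 : ℝ) < k.factorial * m.factorial := by positivity
  calc pstar μ (k + m) ≤ μ ^ (k + m) * Real.exp (-μ) / (k.factorial * m.factorial) := by
        unfold pstar; gcongr
    _ = _ := by
        unfold pstar
        rw [pow_add]
        field_simp

lemma pstar_hasSum (μ : ℝ) : HasSum (pstar μ) 1 := by
  have h : HasSum (fun n : ℕ => μ ^ n / n.factorial) (Real.exp μ) := by
    rw [Real.exp_eq_exp_ℝ]; exact NormedSpace.expSeries_div_hasSum_exp μ
  have h2 := h.mul_right (Real.exp (-μ))
  rw [← Real.exp_add, add_neg_cancel, Real.exp_zero] at h2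
  refine h2.congr_fun ?_
  intro n; unfold pstar; ring

lemma pstar_tail {μ : ℝ} (hμ : 0 < μ) (m N : ℕ) :
    ∑ k ∈ Finset.range N, pstar μ (k + m) ≤ pstar μ m * Real.exp μ := by
  calc _ ≤ ∑ k ∈ Finset.range N, pstar μ m * (μ ^ k / k.factorial) :=
        Finset.sum_le_sum fun k _ => pstar_add_le hμ m k
    _ = pstar μ m * ∑ k ∈ Finset.range N, (μ ^ k / k.factorial) := by rw [Finset.mul_sum]
    _ ≤ _ := by
        have := (pstar_pos' hμ m).le
        gcongr
        exact Real.sum_le_exp_of_nonneg hμ.le N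

lemma gen_sub_pstar (μ : ℝ) (p : ℕ → ℝ) (n : ℕ) :
    gen μ p n = gen μ (fun k => p k - pstar μ k) n := by
  cases n with
  | zero =>
    have := pstar_rec μ 0
    simp only [gen]
    norm_num at this
    linarith
  | succ n =>
    have h1 := pstar_rec μ n
    have h2 := pstar_rec μ (n + 1)
    simp only [gen]
    push_cast at h2
    linarith

lemma hardy_step {a w Q q : ℝ} (ha : 0 < a) (hw : 0 < w) :
    (1 - a) * ((Q + q) ^ 2 / w) + (a - 1) * (Q ^ 2 / (a * w)) ≤ q ^ 2 / w := by
  have : q ^ 2 / w - ((1 - a) * ((Q + q) ^ 2 / w) + (a - 1) * (Q ^ 2 / (a * w)))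
      = (a * (Q + q) - Q) ^ 2 / (a * w) := by
    field_simp; ring
  have h2 : 0 ≤ (a * (Q + q) - Q) ^ 2 / (a * w) := by positivity
  linarith

lemma hardy {μ : ℝ} (hμ : 0 < μ) (q : ℕ → ℝ) (m : ℕ) :
    ∑ n ∈ Finset.range m, (∑ k ∈ Finset.range (n + 1), q k) ^ 2 / pstar μ n / μ
      ≤ ∑ n ∈ Finset.range (m + 1), q n ^ 2 / pstar μ n
        + (m / μ - 1) * ((∑ k ∈ Finset.range (m + 1), q k) ^ 2 / pstar μ m) := by
  induction m with
  | zero => simp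
  | succ m ih =>
    rw [Finset.sum_range_succ, Finset.sum_range_succ _ (m + 1), Finset.sum_range_succ q (m + 1)]
    have h := @hardy_step (((m : ℝ) + 1) / μ) (pstar μ (m + 1))
      (∑ k ∈ Finset.range (m + 1), q k) (q (m + 1)) (by positivity) (pstar_pos' hμ _)
    have hw : ((m : ℝ) + 1) / μ * pstar μ (m + 1) = pstar μ m := by
      have := pstar_rec μ m
      field_simp; linarith
    rw [hw] at h
    push_cast
    set R := (∑ k ∈ Finset.range (m + 1), q k) ^ 2 / pstar μ m
    have e : ((m : ℝ) + 1) / μ = m / μ + 1 / μ := by ring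
    have e2 : R / μ = (1 / μ) * R := by ring
    rw [e] at h ⊢
    rw [e2]
    linarith

lemma energy_parts {μ : ℝ} (hμ : 0 < μ) (q : ℕ → ℝ) (m : ℕ) :
    ∑ n ∈ Finset.range (m + 1), q n ^ 2 / pstar μ n
      = (∑ k ∈ Finset.range (m + 1), q k) * (q m / pstar μ m)
        - ∑ n ∈ Finset.range m, (∑ k ∈ Finset.range (n + 1), q k)
            * (q (n + 1) / pstar μ (n + 1) - q n / pstar μ n) := by
  induction m with
  | zero => simp; ring
  | succ m ih =>
    rw [Finset.sum_range_succ, ih, Finset.sum_range_succ q (m + 1),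
      Finset.sum_range_succ (fun n => (∑ k ∈ Finset.range (n + 1), q k)
            * (q (n + 1) / pstar μ (n + 1) - q n / pstar μ n)) m]
    ring

lemma gen_parts {μ : ℝ} (hμ : 0 < μ) (q : ℕ → ℝ) (m : ℕ) :
    ∑ n ∈ Finset.range (m + 1), q n * gen μ q n / pstar μ n
      = μ * pstar μ m * (q m / pstar μ m) * (q (m + 1) / pstar μ (m + 1) - q m / pstar μ m)
        - ∑ n ∈ Finset.range m, μ * pstar μ n
            * (q (n + 1) / pstar μ (n + 1) - q n / pstar μ n) ^ 2 := by
  have key : ∀ n : ℕ, μ * pstar μ n * (q (n + 1) / pstar μ (n + 1) - q n / pstar μ n)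
      = (n + 1) * q (n + 1) - μ * q n := by
    intro n
    have h0 := (pstar_pos' hμ n).ne'
    have h1 := (pstar_pos' hμ (n + 1)).ne'
    rw [mul_sub, ← pstar_rec μ n]
    rw [mul_div_assoc', mul_div_assoc', pstar_rec]
    congr 1
    · rw [← pstar_rec]; field_simp
    · field_simp
  induction m with
  | zero =>
    have := key 0
    simp only [zero_add, Finset.range_one, Finset.sum_singleton, gen, Finset.range_zero,
      Finset.sum_empty, sub_zero]
    norm_num at this
    rw [← this]; ring
  | succ m ih =>
    rw [Finset.sum_range_succ, ih, Finset.sum_range_succ _ m]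
    have k0 := key m
    have k1 := key (m + 1)
    have hg : gen μ q (m + 1) =
        μ * pstar μ (m + 1) * (q (m + 1 + 1) / pstar μ (m + 1 + 1) - q (m + 1) / pstar μ (m + 1))
        - μ * pstar μ m * (q (m + 1) / pstar μ (m + 1) - q m / pstar μ m) := by
      rw [k0, k1]; simp only [gen]; push_cast; ring
    rw [hg]; ring

lemma tail_bound {μ : ℝ} (hμ : 0 < μ) (q : ℕ → ℝ) (hq : HasSum q 0)
    (hE : Summable fun n => q n ^ 2 / pstar μ n) (m : ℕ) :
    (m + 1) * ((∑ k ∈ Finset.range (m + 1), q k) ^ 2 / pstar μ m)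
      ≤ μ * Real.exp μ * ∑' k, q (k + (m + 1)) ^ 2 / pstar μ (k + (m + 1)) := by
  set T := ∑' k, q (k + (m + 1)) ^ 2 / pstar μ (k + (m + 1)) with hT
  have hs : Summable fun k => q (k + (m + 1)) ^ 2 / pstar μ (k + (m + 1)) :=
    (summable_nat_add_iff (m + 1)).2 hE
  have hnn : ∀ n, 0 ≤ q n ^ 2 / pstar μ n := fun n =>
    div_nonneg (sq_nonneg _) (pstar_pos' hμ n).le
  have hfin : ∀ N, (∑ k ∈ Finset.range N, q (k + (m + 1))) ^ 2
      ≤ T * (pstar μ (m + 1) * Real.exp μ) := by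
    intro N
    refine (Finset.sum_sq_le_sum_mul_sum_of_sq_le_mul (Finset.range N)
      (f := fun k => q (k + (m + 1)) ^ 2 / pstar μ (k + (m + 1)))
      (g := fun k => pstar μ (k + (m + 1))) (fun k _ => hnn _)
      (fun k _ => (pstar_pos' hμ _).le) (fun k _ => le_of_eq ?_)).trans ?_
    · have := (pstar_pos' hμ (k + (m + 1))).ne'
      field_simp
    · refine mul_le_mul (hs.sum_le_tsum _ fun k _ => hnn _) (pstar_tail hμ (m + 1) N)
        (Finset.sum_nonneg fun k _ => (pstar_pos' hμ _).le) (tsum_nonneg fun k => hnn _)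
  have hlim : Tendsto (fun N => ∑ k ∈ Finset.range N, q (k + (m + 1))) atTop
      (𝓝 (-∑ k ∈ Finset.range (m + 1), q k)) := by
    have := ((hasSum_nat_add_iff' (m + 1)).2 hq).tendsto_sum_nat
    simpa using this
  have h := le_of_tendsto' (hlim.pow 2) hfin
  rw [neg_sq] at h
  have hw := pstar_pos' hμ m
  have hr := pstar_rec μ m
  rw [mul_div_assoc', div_le_iff₀ hw]
  calc _ ≤ ((m : ℝ) + 1) * (T * (pstar μ (m + 1) * Real.exp μ)) :=
        mul_le_mul_of_nonneg_left h (by positivity)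
    _ = T * Real.exp μ * ((m + 1) * pstar μ (m + 1)) := by ring
    _ = _ := by rw [hr]; ring

lemma static_bound {μ : ℝ} (hμ : 0 < μ) (q : ℕ → ℝ) (hq : HasSum q 0)
    (hE : Summable fun n => q n ^ 2 / pstar μ n) (S : ℝ)
    (hS : Tendsto (fun m => ∑ n ∈ Finset.range m, q n * gen μ q n / pstar μ n) atTop (𝓝 S)) :
    S + ∑' n, q n ^ 2 / pstar μ n ≤ 0 := by
  set E := ∑' n, q n ^ 2 / pstar μ n with hEdef
  by_contra hcon
  push Not at hcon
  set Q : ℕ → ℝ := fun m => ∑ k ∈ Finset.range (m + 1), q k with hQ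
  set T : ℕ → ℝ := fun m => ∑' k, q (k + (m + 1)) ^ 2 / pstar μ (k + (m + 1)) with hTd
  set b : ℕ → ℝ := fun m => (1 / μ + 1) * (μ * Real.exp μ * T m) + q m ^ 2 / pstar μ m with hb
  have hT0 : Tendsto T atTop (𝓝 0) :=
    (tendsto_sum_nat_add (fun n => q n ^ 2 / pstar μ n)).comp (tendsto_add_atTop_nat 1)
  have hb0 : Tendsto b atTop (𝓝 0) := by
    have := ((hT0.const_mul (μ * Real.exp μ)).const_mul (1 / μ + 1)).add hE.tendsto_atTop_zero
    simpa [hb] using this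
  have hbd : ∀ m, 2 * (Q m * (q m / pstar μ m)) + (m / μ - 1) * (Q m ^ 2 / pstar μ m) ≤ b m := by
    intro m
    have hw := pstar_pos' hμ m
    have ht := tail_bound hμ q hq hE m
    have h1 : 2 * (Q m * (q m / pstar μ m)) ≤ Q m ^ 2 / pstar μ m + q m ^ 2 / pstar μ m := by
      rw [← add_div, mul_div_assoc', mul_div_assoc']
      gcongr
      nlinarith [sq_nonneg (Q m - q m)]
    have hR : 0 ≤ Q m ^ 2 / pstar μ m := by positivity
    have h2 : ((m : ℝ) / μ) * (Q m ^ 2 / pstar μ m)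
        ≤ (1 / μ + 1) * (((m : ℝ) + 1) * (Q m ^ 2 / pstar μ m)) := by
      rw [← mul_assoc]
      gcongr
      have : (1 / μ + 1) * ((m : ℝ) + 1) = m / μ + (1 / μ + m + 1) := by ring
      rw [this]
      have : 0 ≤ 1 / μ + (m : ℝ) + 1 := by positivity
      linarith
    have h3 : (1 / μ + 1) * (((m : ℝ) + 1) * (Q m ^ 2 / pstar μ m))
        ≤ (1 / μ + 1) * (μ * Real.exp μ * T m) := by
      gcongr
    simp only [hb]
    linarith
  have hC : ∀ m, (∑ n ∈ Finset.range (m + 1), q n * gen μ q n / pstar μ n)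
      + (∑ n ∈ Finset.range (m + 1), q n ^ 2 / pstar μ n) - b m
      ≤ μ * pstar μ m * (q m / pstar μ m)
        * (q (m + 1) / pstar μ (m + 1) - q m / pstar μ m) := by
    intro m
    have h1 := hardy hμ q m
    have h2 := energy_parts hμ q m
    have h3 := gen_parts hμ q m
    have h4 : -∑ n ∈ Finset.range m, 2 * ((∑ k ∈ Finset.range (n + 1), q k)
            * (q (n + 1) / pstar μ (n + 1) - q n / pstar μ n))
        ≤ ∑ n ∈ Finset.range m, (∑ k ∈ Finset.range (n + 1), q k) ^ 2 / pstar μ n / μ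
          + ∑ n ∈ Finset.range m, μ * pstar μ n
            * (q (n + 1) / pstar μ (n + 1) - q n / pstar μ n) ^ 2 := by
      rw [← Finset.sum_neg_distrib, ← Finset.sum_add_distrib]
      refine Finset.sum_le_sum fun n _ => ?_
      have hw := pstar_pos' hμ n
      generalize (∑ k ∈ Finset.range (n + 1), q k) = A
      generalize (q (n + 1) / pstar μ (n + 1) - q n / pstar μ n) = g
      have : A ^ 2 / pstar μ n / μ + μ * pstar μ n * g ^ 2 + 2 * (A * g)
          = (A + μ * pstar μ n * g) ^ 2 / (μ * pstar μ n) := by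
        field_simp; ring
      have h5 : 0 ≤ (A + μ * pstar μ n * g) ^ 2 / (μ * pstar μ n) := by positivity
      linarith
    rw [← Finset.mul_sum] at h4
    have h5 := hbd m
    simp only [hQ] at h5
    linarith
  have hlim : Tendsto (fun m => (∑ n ∈ Finset.range (m + 1), q n * gen μ q n / pstar μ n)
      + (∑ n ∈ Finset.range (m + 1), q n ^ 2 / pstar μ n) - b m) atTop (𝓝 (S + E)) := by
    have h1 := hS.comp (tendsto_add_atTop_nat 1)
    have h2 := hE.hasSum.tendsto_sum_nat.comp (tendsto_add_atTop_nat 1)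
    simpa using (h1.add h2).sub hb0
  set c := (S + E) / 2 with hc
  have hcpos : 0 < c := by positivity
  have hev : ∀ᶠ m : ℕ in atTop, c ≤ (∑ n ∈ Finset.range (m + 1), q n * gen μ q n / pstar μ n)
      + (∑ n ∈ Finset.range (m + 1), q n ^ 2 / pstar μ n) - b m :=
    hlim.eventually_const_le (by linarith)
  obtain ⟨M, hM⟩ := eventually_atTop.1 hev
  have hlow : ∀ m ≥ M, 2 * c * (1 / ((m + 1 : ℕ) : ℝ)) ≤ q (m + 1) ^ 2 / pstar μ (m + 1) := by
    intro m hm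
    have h := (hM m hm).trans (hC m)
    have hw := pstar_pos' hμ m
    have hw1 := pstar_pos' hμ (m + 1)
    have e : q (m + 1) ^ 2 / pstar μ (m + 1)
        = pstar μ (m + 1) * (q (m + 1) / pstar μ (m + 1)) ^ 2 := by field_simp
    rw [e]
    have hr : pstar μ (m + 1) = μ * pstar μ m / ((m : ℝ) + 1) := by
      rw [← pstar_rec]; field_simp
    generalize q (m + 1) / pstar μ (m + 1) = y at *
    generalize q m / pstar μ m = x at *
    rw [hr]
    push_cast
    rw [mul_one_div, div_mul_eq_mul_div]
    refine div_le_div_of_nonneg_right ?_ (by positivity)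
    have hp : 0 < μ * pstar μ m := by positivity
    nlinarith [mul_nonneg hp.le (sq_nonneg (y - x)), mul_nonneg hp.le (sq_nonneg x)]
  have hsum : Summable fun m : ℕ => 2 * c * (1 / ((m + (M + 1) : ℕ) : ℝ)) := by
    refine Summable.of_nonneg_of_le (fun m => by positivity) (fun m => ?_)
      ((summable_nat_add_iff (M + 1)).2 hE)
    exact hlow (m + M) (by omega)
  have h2 := (summable_mul_left_iff (by positivity : 2 * c ≠ 0)).1 hsum
  have h3 := (summable_nat_add_iff (f := fun m : ℕ => 1 / (m : ℝ)) (M + 1)).1 h2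
  exact Real.not_summable_one_div_natCast h3

/-- Exponential decay of the χ² distance (equivalently, of the energy
`E[p(t) - p*] = ∑_n (p_n(t) - p*_n)² / p*_n`):
`E[p(t) - p*] ≤ E[p(0) - p*] e^{-t}` for all `t ≥ 0`. -/
theorem chi2_exponential_decay (μ : ℝ) (hμ : 0 < μ) (p : ℝ → ℕ → ℝ)
    (hode : ∀ t ∈ Set.Ici (0 : ℝ), ∀ n : ℕ,
      HasDerivWithinAt (fun s => p s n) (gen μ (p t) n) (Set.Ici 0) t)
    (hV : ∀ t ∈ Set.Ici (0 : ℝ), memV μ (p t))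
    (hE0 : Summable (fun n : ℕ => (p 0 n - pstar μ n) ^ 2 / pstar μ n))
    (hunifE : UnifConvOnCompacts (fun n t => (p t n - pstar μ n) ^ 2 / pstar μ n))
    (hunifE' : UnifConvOnCompacts
      (fun n t => 2 * (p t n - pstar μ n) * gen μ (p t) n / pstar μ n))
    (hunifE'' : UnifConvOnCompacts
      (fun n t => 2 * ((gen μ (p t) n) ^ 2 + (p t n - pstar μ n) * gen μ (gen μ (p t)) n)
        / pstar μ n)) :
    ∀ t ∈ Set.Ici (0 : ℝ),
      ∑' n : ℕ, (p t n - pstar μ n) ^ 2 / pstar μ n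
        ≤ (∑' n : ℕ, (p 0 n - pstar μ n) ^ 2 / pstar μ n) * Real.exp (-t) := by
  have hnn : ∀ t n, 0 ≤ (p t n - pstar μ n) ^ 2 / pstar μ n := fun t n =>
    div_nonneg (sq_nonneg _) (pstar_pos' hμ n).le
  have hpt : ∀ {f : ℕ → ℝ → ℝ}, UnifConvOnCompacts f → ∀ t ∈ Set.Ici (0 : ℝ),
      Tendsto (fun m => ∑ n ∈ Finset.range m, f n t) atTop (𝓝 (∑' n, f n t)) := by
    intro f hf t ht
    exact (hf {t} (by simpa using ht) isCompact_singleton).tendsto_at rfl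
  have hsumm : ∀ t ∈ Set.Ici (0 : ℝ), Summable fun n => (p t n - pstar μ n) ^ 2 / pstar μ n := by
    intro t ht
    exact ((hasSum_iff_tendsto_nat_of_nonneg (hnn t) _).2 (hpt hunifE t ht)).summable
  set E : ℝ → ℝ := fun t => ∑' n : ℕ, (p t n - pstar μ n) ^ 2 / pstar μ n with hEd
  set E' : ℝ → ℝ := fun t => ∑' n : ℕ, 2 * (p t n - pstar μ n) * gen μ (p t) n / pstar μ n
    with hEd'
  have hbound : ∀ t ∈ Set.Ici (0 : ℝ), E' t ≤ - E t := by
    intro t ht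
    have hq : HasSum (fun n => p t n - pstar μ n) 0 := by
      have h1 := (hV t ht).2.1
      have hs : Summable (p t) := by
        by_contra hns
        rw [tsum_eq_zero_of_not_summable hns] at h1
        exact zero_ne_one h1
      have := (h1 ▸ hs.hasSum).sub (pstar_hasSum μ)
      simpa using this
    have hS := (hpt hunifE' t ht).const_mul (1 / 2)
    have h := static_bound hμ _ hq (hsumm t ht) (1 / 2 * E' t) (by
      refine hS.congr fun m => ?_
      rw [Finset.mul_sum]
      refine Finset.sum_congr rfl fun n _ => ?_
      rw [← gen_sub_pstar]
      ring)
    have hE0 : 0 ≤ E t := tsum_nonneg (hnn t)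
    change 1 / 2 * E' t + E t ≤ 0 at h
    linarith
  have hderivn : ∀ m : ℕ, ∀ t ∈ Set.Ici (0 : ℝ), HasDerivWithinAt
      (fun t => ∑ n ∈ Finset.range m, (p t n - pstar μ n) ^ 2 / pstar μ n)
      (∑ n ∈ Finset.range m, 2 * (p t n - pstar μ n) * gen μ (p t) n / pstar μ n)
      (Set.Ici 0) t := by
    intro m t ht
    refine HasDerivWithinAt.fun_sum fun n _ => ?_
    have := (((hode t ht n).sub_const (pstar μ n)).fun_pow 2).div_const (pstar μ n)
    simpa using this
  have hderiv : ∀ t ∈ Set.Ioi (0 : ℝ), HasDerivAt E (E' t) t := by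
    intro t ht
    refine hasDerivAt_of_tendstoLocallyUniformlyOn (l := atTop)
      (f := fun (m : ℕ) t => ∑ n ∈ Finset.range m, (p t n - pstar μ n) ^ 2 / pstar μ n)
      (f' := fun (m : ℕ) t =>
        ∑ n ∈ Finset.range m, 2 * (p t n - pstar μ n) * gen μ (p t) n / pstar μ n)
      isOpen_Ioi ?_ ?_ ?_ ht
    · rw [tendstoLocallyUniformlyOn_iff_forall_isCompact isOpen_Ioi]
      intro K hK hKc
      exact hunifE' K (hK.trans Set.Ioi_subset_Ici_self) hKc
    · refine Eventually.of_forall fun m x hx => ?_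
      exact (hderivn m x (Set.Ioi_subset_Ici_self hx)).hasDerivAt (Ici_mem_nhds hx)
    · intro x hx
      exact hpt hunifE x (Set.Ioi_subset_Ici_self hx)
  intro t ht
  have ht0 : (0 : ℝ) ≤ t := ht
  have hcont : ContinuousOn E (Set.Icc 0 t) := by
    refine (hunifE (Set.Icc 0 t) Set.Icc_subset_Ici_self isCompact_Icc).continuousOn
      (Frequently.of_forall fun m => ?_)
    intro x hx
    exact ((hderivn m x hx.1).continuousWithinAt).mono Set.Icc_subset_Ici_self
  have hanti : AntitoneOn (fun s => E s * Real.exp s) (Set.Icc 0 t) := by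
    have hd : ∀ x ∈ interior (Set.Icc 0 t), HasDerivAt (fun s => E s * Real.exp s)
        (E' x * Real.exp x + E x * Real.exp x) x := by
      intro x hx
      rw [interior_Icc] at hx
      exact (hderiv x hx.1).mul (Real.hasDerivAt_exp x)
    refine antitoneOn_of_deriv_nonpos (convex_Icc 0 t)
      (hcont.mul Real.continuous_exp.continuousOn)
      (fun x hx => (hd x hx).differentiableAt.differentiableWithinAt) fun x hx => ?_
    rw [(hd x hx).deriv]
    rw [interior_Icc] at hx
    have := hbound x hx.1.le
    nlinarith [Real.exp_pos x]
  have h := hanti (Set.left_mem_Icc.2 ht0) (Set.right_mem_Icc.2 ht0) ht0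
  simp only [Real.exp_zero, mul_one] at h
  change E t ≤ E 0 * Real.exp (-t)
  rw [Real.exp_neg, ← div_eq_mul_inv, le_div_iff₀ (Real.exp_pos t)]
  exact h
end

section
/- Fix integers N ≥ 2, μ ≥ 1 and 1 ≤ k ≤ N. Let P : [0,∞) → probability measures on ℕ^N be a solution of the poor-biased master equation whose initial condition P_0 is supported on 𝒜_{N,μ} and is exchangeable (invariant under permutations of the N coordinates). Then for every t ≥ 0, W₁(π_k(P_t), M_{N,k}) ≤ 2·μ·e^{−t}, where π_k denotes the k-particle marginal (pushforward under (S_1,…,S_N) ↦ (S_1,…,S_k)), M_{N,k} := π_k(M_N), and W₁ is the normalized Wasserstein-1 distance on ℕ^k. -/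
open MeasureTheory ENNReal

noncomputable section

/-- The configuration obtained from `S` by adding a dollar to agent `i` and removing
one from agent `j`, i.e. `S + e_i - e_j`. -/
def moveDollar {N : ℕ} (S : Fin N → ℕ) (i j : Fin N) : Fin N → ℕ :=
  Function.update (Function.update S i (S i + 1)) j (S j - 1)

/-- The right-hand side of the poor-biased master equation at configuration `S`:
`∑_{i ≠ j} [((S_i+1)/N) P(S + e_i - e_j) 1_{S_j ≥ 1} - (S_i/N) P(S)]`. -/
def masterRHS {N : ℕ} (P : Measure (Fin N → ℕ)) (S : Fin N → ℕ) : ℝ :=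
  ∑ i : Fin N, ∑ j : Fin N,
    if i ≠ j then
      (((S i : ℝ) + 1) / N) * (P {moveDollar S i j}).toReal * (if 1 ≤ S j then 1 else 0)
        - ((S i : ℝ) / N) * (P {S}).toReal
    else 0

/-- A solution of the poor-biased master equation on `[0, ∞)`: a family of probability
measures on `ℕ^N` whose point masses are differentiable in time with derivative given
by the master equation. -/
def IsMasterSolution {N : ℕ} (P : ℝ → Measure (Fin N → ℕ)) : Prop :=
  (∀ t ∈ Set.Ici (0 : ℝ), IsProbabilityMeasure (P t)) ∧
    ∀ S : Fin N → ℕ, ∀ t ∈ Set.Ici (0 : ℝ),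
      HasDerivWithinAt (fun s => ((P s) {S}).toReal) (masterRHS (P t) S) (Set.Ici 0) t

/-- The normalized Wasserstein-1 distance (valued in `ℝ≥0∞`) between two measures on
`ℕ^d`: the infimum over couplings of the expected normalized `ℓ¹` distance. -/
def W1 (d : ℕ) (π₁ π₂ : Measure (Fin d → ℕ)) : ℝ≥0∞ :=
  ⨅ (π : Measure ((Fin d → ℕ) × (Fin d → ℕ))) (_ : π.map Prod.fst = π₁)
      (_ : π.map Prod.snd = π₂),
    ∫⁻ z, (∑ j : Fin d, (Nat.dist (z.1 j) (z.2 j) : ℝ≥0∞)) / (d : ℝ≥0∞) ∂π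

/-- The multinomial distribution `M_N` on `𝒜_{N,μ}` (extended by `0` to `ℕ^N`):
`M_N(S) = ((Nμ)! / (S_1! ⋯ S_N!)) N^{-Nμ}` when `∑_i S_i = Nμ`. -/
def MNmeas (N μ : ℕ) : Measure (Fin N → ℕ) :=
  Measure.sum (fun S : Fin N → ℕ =>
    (if ∑ i, S i = N * μ then
        ENNReal.ofReal (((N * μ).factorial : ℝ) / ((∏ i, (S i).factorial : ℕ) * (N : ℝ) ^ (N * μ)))
      else 0) • Measure.dirac S)

/-- The `k`-particle marginal of a measure on `ℕ^N`: the pushforward under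
`(S_1, …, S_N) ↦ (S_1, …, S_k)`. -/
def marginal {N : ℕ} (k : ℕ) (h : k ≤ N) (π : Measure (Fin N → ℕ)) :
    Measure (Fin k → ℕ) :=
  π.map (fun S => fun i : Fin k => S (Fin.castLE h i))

/-- Number of dollars held by each agent in the labelled configuration `c`. -/
def cnt {n N : ℕ} (c : Fin n → Fin N) : Fin N → ℕ := fun j => ∑ m, if c m = j then 1 else 0

lemma sum_cnt {n N : ℕ} (c : Fin n → Fin N) : ∑ j, cnt c j = n := by
  unfold cnt
  rw [Finset.sum_comm]
  simp

lemma cnt_wsum {n N : ℕ} (c : Fin n → Fin N) (g : Fin N → ℝ) :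
    ∑ m, g (c m) = ∑ i, (cnt c i : ℝ) * g i := by
  unfold cnt
  push_cast
  simp_rw [Finset.sum_mul]
  rw [Finset.sum_comm]
  simp

lemma card_cnt {n N : ℕ} (S : Fin N → ℕ) (hS : ∑ i, S i = n) :
    (∏ i, (S i).factorial) * (Finset.univ.filter (fun c : Fin n → Fin N => cnt c = S)).card
      = n.factorial := by
  have h := MvPolynomial.coeff_sum_X_pow_of_fintype (R := ℕ) (Finsupp.equivFunOnFinite.symm S) n
  have h1 : ((∑ i, MvPolynomial.X i : MvPolynomial (Fin N) ℕ)) ^ n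
      = ∑ c : Fin n → Fin N, MvPolynomial.monomial (Finsupp.equivFunOnFinite.symm (cnt c)) 1 := by
    have := (Fintype.prod_sum (fun (_ : Fin n) (i : Fin N) =>
      (MvPolynomial.X i : MvPolynomial (Fin N) ℕ)))
    rw [Finset.prod_const, Finset.card_univ, Fintype.card_fin] at this
    rw [this]
    refine Finset.sum_congr rfl fun c _ => ?_
    have h2 : Finsupp.equivFunOnFinite.symm (cnt c) = ∑ m, Finsupp.single (c m) 1 := by
      ext j
      simp [cnt, Finsupp.finsetSum_apply, Finsupp.single_apply]
    rw [h2, MvPolynomial.monomial_sum_one]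
    rfl
  rw [h1, MvPolynomial.coeff_sum] at h
  simp only [MvPolynomial.coeff_monomial, EmbeddingLike.apply_eq_iff_eq] at h
  rw [Finset.sum_boole] at h
  have h3 : ((Finsupp.equivFunOnFinite.symm S).sum fun _ m => m) = n := by
    rw [Finsupp.sum_fintype _ _ (by simp)]
    simpa using hS
  rw [if_pos h3, ← Finsupp.multinomial_of_support_subset (Finset.subset_univ _)] at h
  simp only [Nat.cast_id] at h
  rw [h, ← hS]
  exact Nat.multinomial_spec Finset.univ S

/-- The master equation operator on functions. -/
def rhsF {N : ℕ} (p : (Fin N → ℕ) → ℝ) (S : Fin N → ℕ) : ℝ :=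
  ∑ i : Fin N, ∑ j : Fin N,
    if i ≠ j then
      (((S i : ℝ) + 1) / N) * p (moveDollar S i j) * (if 1 ≤ S j then 1 else 0)
        - ((S i : ℝ) / N) * p S
    else 0

lemma sum_moveDollar {N : ℕ} (S : Fin N → ℕ) {i j : Fin N} (hij : i ≠ j) (hj : 1 ≤ S j) :
    ∑ l, moveDollar S i j l = ∑ l, S l := by
  unfold moveDollar
  rw [Finset.sum_update_of_mem (Finset.mem_univ _),
    Finset.sum_update_of_mem (by simpa using hij)]
  rw [← Finset.add_sum_erase Finset.univ S (Finset.mem_univ j),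
    ← Finset.add_sum_erase (Finset.univ.erase j) S (a := i) (by simpa using hij)]
  simp only [Finset.sdiff_singleton_eq_erase]
  omega

/-- Extension by zero from a level set. -/
def extF {N : ℕ} (n : ℕ) (f : {S : Fin N → ℕ // S ∈ Finset.piAntidiag Finset.univ n} → ℝ)
    (S : Fin N → ℕ) : ℝ :=
  if h : S ∈ Finset.piAntidiag Finset.univ n then f ⟨S, h⟩ else 0

lemma rhsF_ext {N n : ℕ} (p : (Fin N → ℕ) → ℝ) (S : Fin N → ℕ)
    (hS : S ∈ Finset.piAntidiag Finset.univ n) :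
    rhsF (extF n (fun S => p S.1)) S = rhsF p S := by
  unfold rhsF
  refine Finset.sum_congr rfl fun i _ => Finset.sum_congr rfl fun j _ => ?_
  split_ifs with hij hj
  · have : moveDollar S i j ∈ Finset.piAntidiag Finset.univ n := by
      simp only [Finset.mem_piAntidiag, Finset.mem_univ, implies_true, and_true] at hS ⊢
      rw [sum_moveDollar S hij hj, hS]
    simp only [extF, dif_pos hS, dif_pos this]
  · simp only [extF, dif_pos hS, mul_zero]
  · rfl

/-- The master operator on one level set, as a linear map. -/
def rhsL (N n : ℕ) : ({S : Fin N → ℕ // S ∈ Finset.piAntidiag Finset.univ n} → ℝ) →ₗ[ℝ]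
    ({S : Fin N → ℕ // S ∈ Finset.piAntidiag Finset.univ n} → ℝ) where
  toFun f := fun S => rhsF (extF n f) S.1
  map_add' f g := by
    ext S
    have h : extF n (f + g) = extF n f + extF n g := by
      ext T; unfold extF; simp only [Pi.add_apply]; split_ifs <;> simp
    simp only [h, rhsF, Pi.add_apply, ← Finset.sum_add_distrib]
    refine Finset.sum_congr rfl fun i _ => Finset.sum_congr rfl fun j _ => ?_
    split_ifs <;> ring
  map_smul' a f := by
    ext S
    have h : extF n (a • f) = a • extF n f := by
      ext T; unfold extF; simp only [Pi.smul_apply]; split_ifs <;> simp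
    simp only [h, rhsF, Pi.smul_apply, Finset.mul_sum, smul_eq_mul, RingHom.id_apply]
    refine Finset.sum_congr rfl fun i _ => Finset.sum_congr rfl fun j _ => ?_
    split_ifs <;> ring

lemma rhsF_unique {N : ℕ} (f g : ℝ → (Fin N → ℕ) → ℝ)
    (hf : ∀ S, ∀ t ∈ Set.Ici (0 : ℝ), HasDerivWithinAt (fun s => f s S) (rhsF (f t) S) (Set.Ici 0) t)
    (hg : ∀ S, ∀ t ∈ Set.Ici (0 : ℝ), HasDerivWithinAt (fun s => g s S) (rhsF (g t) S) (Set.Ici 0) t)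
    (h0 : ∀ S, f 0 S = g 0 S) (t : ℝ) (ht : 0 ≤ t) (S : Fin N → ℕ) : f t S = g t S := by
  set n := ∑ i, S i with hn
  let A := LinearMap.toContinuousLinearMap (rhsL N n)
  have key : ∀ f : ℝ → (Fin N → ℕ) → ℝ, (∀ S, ∀ t ∈ Set.Ici (0 : ℝ),
      HasDerivWithinAt (fun s => f s S) (rhsF (f t) S) (Set.Ici 0) t) →
      ∀ t ∈ Set.Ici (0 : ℝ), HasDerivWithinAt
        (fun s => (fun T : {S : Fin N → ℕ // S ∈ Finset.piAntidiag Finset.univ n} => f s T.1))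
        (A (fun T => f t T.1)) (Set.Ici 0) t := by
    intro f hf t ht
    rw [hasDerivWithinAt_pi]
    intro T
    have := hf T.1 t ht
    rw [← rhsF_ext (f t) T.1 T.2] at this
    exact this
  have := ODE_solution_unique_of_mem_Icc_right (a := 0) (b := t) (v := fun _ => A)
    (s := fun _ => Set.univ) (K := ‖A‖₊)
    (f := fun s => (fun T : {S : Fin N → ℕ // S ∈ Finset.piAntidiag Finset.univ n} => f s T.1))
    (g := fun s => (fun T : {S : Fin N → ℕ // S ∈ Finset.piAntidiag Finset.univ n} => g s T.1))
    (fun _ _ => A.lipschitz.lipschitzOnWith)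
    (fun s hs => ((key f hf s hs.1).continuousWithinAt).mono (fun x hx => hx.1))
    (fun s hs => (key f hf s hs.1).mono (Set.Ici_subset_Ici.2 hs.1)) (fun _ _ => trivial)
    (fun s hs => ((key g hg s hs.1).continuousWithinAt).mono (fun x hx => hx.1))
    (fun s hs => (key g hg s hs.1).mono (Set.Ici_subset_Ici.2 hs.1)) (fun _ _ => trivial)
    (funext fun T => h0 T.1)
  have h2 := this (Set.right_mem_Icc.2 ht)
  exact congrFun h2 ⟨S, by simp [hn]⟩

lemma cnt_update_apply {n N : ℕ} (c : Fin n → Fin N) (m : Fin n) (j l : Fin N) :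
    cnt (Function.update c m j) l + (if c m = l then 1 else 0)
      = cnt c l + (if j = l then 1 else 0) := by
  unfold cnt
  rw [← Finset.add_sum_erase Finset.univ _ (Finset.mem_univ m),
    ← Finset.add_sum_erase Finset.univ (fun m => if c m = l then 1 else 0) (Finset.mem_univ m)]
  have : ∑ x ∈ Finset.univ.erase m, (if Function.update c m j x = l then 1 else 0)
      = ∑ x ∈ Finset.univ.erase m, (if c x = l then 1 else 0) := by
    refine Finset.sum_congr rfl fun x hx => ?_
    rw [Function.update_of_ne (Finset.ne_of_mem_erase hx)]
  rw [this]
  simp only [Function.update_self]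
  omega

lemma cnt_update_eq_iff {n N : ℕ} (c : Fin n → Fin N) (m : Fin n) (j : Fin N) (hj : c m ≠ j)
    (S : Fin N → ℕ) :
    cnt (Function.update c m j) = S ↔ 1 ≤ S j ∧ cnt c = moveDollar S (c m) j := by
  have h := cnt_update_apply c m j
  constructor
  · rintro rfl
    refine ⟨?_, ?_⟩
    · have := h j
      simp only [hj, if_true, if_false] at this
      omega
    · ext l
      have := h l
      have h2 := h j
      have h3 := h (c m)
      unfold moveDollar
      simp only [Function.update_apply]
      grind
  · rintro ⟨h1, h2⟩
    ext l
    have h3 := h l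
    have h4 := congrFun h2 l
    unfold moveDollar at h4
    simp only [Function.update_apply] at h4
    grind

lemma generator_point {n N : ℕ} (c : Fin n → Fin N) (S : Fin N → ℕ) :
    ∑ m, ∑ a, ((if cnt (Function.update c m a) = S then (1 : ℝ) else 0)
        - (if cnt c = S then 1 else 0)) / N
      = rhsF (fun T => if cnt c = T then 1 else 0) S := by
  have h1 : ∀ m, ∑ a, ((if cnt (Function.update c m a) = S then (1 : ℝ) else 0)
        - (if cnt c = S then 1 else 0)) / N
      = (fun i => ∑ j, if i ≠ j then
        ((if 1 ≤ S j ∧ cnt c = moveDollar S i j then (1 : ℝ) else 0)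
        - (if cnt c = S then 1 else 0)) / N else 0) (c m) := by
    intro m
    refine Finset.sum_congr rfl fun j _ => ?_
    by_cases hj : c m = j
    · subst hj
      simp
    · simp only [cnt_update_eq_iff c m j hj, ne_eq, hj, not_false_iff, if_true]
  rw [Finset.sum_congr rfl (fun m _ => h1 m)]
  refine (cnt_wsum c (fun i => ∑ j, if i ≠ j then
        ((if 1 ≤ S j ∧ cnt c = moveDollar S i j then (1 : ℝ) else 0)
        - (if cnt c = S then 1 else 0)) / N else 0)).trans ?_
  unfold rhsF
  refine Finset.sum_congr rfl fun i _ => ?_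
  rw [Finset.mul_sum]
  refine Finset.sum_congr rfl fun j _ => ?_
  by_cases hij : i = j
  · simp [hij]
  · simp only [ne_eq, hij, not_false_iff, if_true]
    have e1 : (cnt c i : ℝ) * (if cnt c = S then 1 else 0) = S i * (if cnt c = S then 1 else 0) := by
      split_ifs with h
      · rw [h]
      · simp
    have e2 : (cnt c i : ℝ) * (if 1 ≤ S j ∧ cnt c = moveDollar S i j then 1 else 0)
        = (S i + 1) * (if cnt c = moveDollar S i j then 1 else 0) * (if 1 ≤ S j then 1 else 0) := by
      by_cases h : cnt c = moveDollar S i j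
      · have : cnt c i = S i + 1 := by
          rw [h]; simp [moveDollar, Function.update_apply, hij]
        rw [this]
        simp [h]
      · simp [h]
    calc _ = ((cnt c i : ℝ) * (if 1 ≤ S j ∧ cnt c = moveDollar S i j then 1 else 0)
        - (cnt c i : ℝ) * (if cnt c = S then 1 else 0)) / N := by ring
      _ = _ := by rw [e1, e2]; ring

lemma rhsF_sum {N : ℕ} {ι : Type*} (s : Finset ι) (a : ι → ℝ) (p : ι → (Fin N → ℕ) → ℝ)
    (S : Fin N → ℕ) :
    rhsF (fun T => ∑ x ∈ s, a x * p x T) S = ∑ x ∈ s, a x * rhsF (p x) S := by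
  unfold rhsF
  simp_rw [Finset.mul_sum]
  rw [Finset.sum_comm]
  simp_rw [Finset.sum_comm (s := s)]
  rw [Finset.sum_comm]
  refine Finset.sum_congr rfl fun i _ => Finset.sum_congr rfl fun j _ => ?_
  split_ifs
  · rw [Finset.sum_mul, ← Finset.sum_sub_distrib]
    exact Finset.sum_congr rfl fun x _ => by ring
  · rw [Finset.sum_mul, ← Finset.sum_sub_distrib]
    exact Finset.sum_congr rfl fun x _ => by ring
  · simp

lemma sum_update_swap {n N : ℕ} (m : Fin n) (F p : (Fin n → Fin N) → ℝ) :
    ∑ c, ∑ b, F c * p (Function.update c m b) = ∑ c, ∑ b, F (Function.update c m b) * p c := by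
  rw [← Fintype.sum_prod_type', ← Fintype.sum_prod_type']
  refine Finset.sum_nbij' (fun x => (Function.update x.1 m x.2, x.1 m))
    (fun x => (Function.update x.1 m x.2, x.1 m)) ?_ ?_ ?_ ?_ ?_ <;> simp

/-- One-dollar transition probability. -/
def qt (N : ℕ) (t : ℝ) (a b : Fin N) : ℝ :=
  Real.exp (-t) * (if a = b then 1 else 0) + (1 - Real.exp (-t)) / N

lemma qt_deriv {N : ℕ} (a b : Fin N) (t : ℝ) :
    HasDerivAt (fun s => qt N s a b) (1 / N - qt N t a b) t := by
  unfold qt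
  have h : HasDerivAt (fun s : ℝ => Real.exp (-s)) (-Real.exp (-t)) t := by
    simpa using (hasDerivAt_neg t).exp
  convert! (h.mul_const (if a = b then (1 : ℝ) else 0)).add ((h.const_sub 1).div_const (N : ℝ)) using 1
  ring

lemma qt_sum {N : ℕ} (hN : N ≠ 0) (a : Fin N) (t : ℝ) : ∑ b, qt N t a b = 1 := by
  unfold qt
  rw [Finset.sum_add_distrib, ← Finset.mul_sum]
  simp
  field_simp
  ring

/-- Transition probability of all labelled dollars. -/
def pt {n N : ℕ} (t : ℝ) (c₀ c : Fin n → Fin N) : ℝ := ∏ m, qt N t (c₀ m) (c m)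

lemma pt_deriv {n N : ℕ} (hN : N ≠ 0) (c₀ c : Fin n → Fin N) (t : ℝ) :
    HasDerivAt (fun s => pt s c₀ c)
      (∑ m, ∑ b, (pt t c₀ (Function.update c m b) - pt t c₀ c) / N) t := by
  unfold pt
  have h := HasDerivAt.fun_finsetProd (u := Finset.univ) (x := t)
    (f := fun m s => qt N s (c₀ m) (c m)) (fun m _ => qt_deriv (c₀ m) (c m) t)
  convert! h using 1
  refine Finset.sum_congr rfl fun m _ => ?_
  have h1 : ∀ b, ∏ x, qt N t (c₀ x) (Function.update c m b x)
      = qt N t (c₀ m) b * ∏ x ∈ Finset.univ.erase m, qt N t (c₀ x) (c x) := by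
    intro b
    rw [← Finset.mul_prod_erase Finset.univ _ (Finset.mem_univ m), Function.update_self]
    congr 1
    refine Finset.prod_congr rfl fun x hx => ?_
    rw [Function.update_of_ne (Finset.ne_of_mem_erase hx)]
  simp_rw [h1]
  rw [← Finset.sum_div, Finset.sum_sub_distrib, ← Finset.sum_mul, qt_sum hN,
    ← Finset.mul_prod_erase Finset.univ _ (Finset.mem_univ m)]
  simp
  field_simp

/-- The explicit solution. -/
def Qt {n N : ℕ} (w : (Fin n → Fin N) → ℝ) (t : ℝ) (S : Fin N → ℕ) : ℝ :=
  ∑ c, (∑ c₀, w c₀ * pt t c₀ c) * (if cnt c = S then 1 else 0)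

lemma Qt_deriv {n N : ℕ} (hN : N ≠ 0) (w : (Fin n → Fin N) → ℝ) (t : ℝ) (S : Fin N → ℕ) :
    HasDerivAt (fun s => Qt w s S) (rhsF (Qt w t) S) t := by
  have h : HasDerivAt (fun s => Qt w s S) (∑ c, (∑ c₀, w c₀ *
      (∑ m, ∑ b, (pt t c₀ (Function.update c m b) - pt t c₀ c) / N))
      * (if cnt c = S then 1 else 0)) t := by
    unfold Qt
    refine HasDerivAt.fun_sum fun c _ => HasDerivAt.mul_const ?_ _
    exact HasDerivAt.fun_sum fun c₀ _ => (pt_deriv hN c₀ c t).const_mul _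
  convert! h using 1
  unfold Qt
  rw [rhsF_sum]
  simp_rw [← generator_point, Finset.sum_mul]
  rw [Finset.sum_comm]
  conv_rhs => rw [Finset.sum_comm]
  refine Finset.sum_congr rfl fun c₀ _ => ?_
  simp_rw [mul_assoc]
  rw [← Finset.mul_sum, ← Finset.mul_sum]
  congr 1
  simp_rw [Finset.mul_sum, Finset.sum_mul]
  rw [Finset.sum_comm]
  conv_rhs => rw [Finset.sum_comm]
  refine Finset.sum_congr rfl fun m _ => ?_
  have := sum_update_swap m (fun c => if cnt c = S then (1 : ℝ) else 0) (pt t c₀)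
  have e1 : ∀ c b, pt t c₀ c * (((if cnt (Function.update c m b) = S then (1 : ℝ) else 0)
        - (if cnt c = S then 1 else 0)) / N)
      = ((if cnt (Function.update c m b) = S then (1 : ℝ) else 0) * pt t c₀ c) / N
        - pt t c₀ c * (if cnt c = S then 1 else 0) / N := fun c b => by ring
  have e2 : ∀ c b, (pt t c₀ (Function.update c m b) - pt t c₀ c) / N
      * (if cnt c = S then (1 : ℝ) else 0)
      = ((if cnt c = S then (1 : ℝ) else 0) * pt t c₀ (Function.update c m b)) / N
        - pt t c₀ c * (if cnt c = S then 1 else 0) / N := fun c b => by ring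
  simp_rw [e1, e2, Finset.sum_sub_distrib, ← Finset.sum_div]
  rw [this]

lemma Qt_zero {n N : ℕ} (w : (Fin n → Fin N) → ℝ) (S : Fin N → ℕ) :
    Qt w 0 S = ∑ c, w c * (if cnt c = S then 1 else 0) := by
  unfold Qt
  refine Finset.sum_congr rfl fun c _ => ?_
  congr 1
  have : ∀ c₀ : Fin n → Fin N, pt 0 c₀ c = if c₀ = c then 1 else 0 := by
    intro c₀
    unfold pt qt
    simp only [neg_zero, Real.exp_zero, one_mul, sub_self, zero_div, add_zero]
    rw [Finset.prod_boole]
    simp [funext_iff]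
  simp [this]

/-- One-dollar coupling of the evolved position `x` with a uniform position `u`. -/
def rj (N : ℕ) (t : ℝ) (a x u : Fin N) : ℝ :=
  Real.exp (-t) * (if a = x then 1 else 0) / N + (1 - Real.exp (-t)) / N * (if x = u then 1 else 0)

lemma rj_nonneg {N : ℕ} {t : ℝ} (ht : 0 ≤ t) (a x u : Fin N) : 0 ≤ rj N t a x u := by
  unfold rj
  have h : 0 ≤ 1 - Real.exp (-t) := by
    rw [sub_nonneg, Real.exp_le_one_iff]; linarith
  have := (Real.exp_pos (-t)).le
  have h1 : (0 : ℝ) ≤ (if a = x then 1 else 0) := by split_ifs <;> norm_num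
  have h2 : (0 : ℝ) ≤ (if x = u then 1 else 0) := by split_ifs <;> norm_num
  positivity

lemma rj_sum_u {N : ℕ} (hN : N ≠ 0) (t : ℝ) (a x : Fin N) : ∑ u, rj N t a x u = qt N t a x := by
  unfold rj qt
  rw [Finset.sum_add_distrib, ← Finset.mul_sum]
  simp
  field_simp

lemma rj_sum_x {N : ℕ} (t : ℝ) (a u : Fin N) : ∑ x, rj N t a x u = 1 / N := by
  unfold rj
  rw [Finset.sum_add_distrib, ← Finset.mul_sum, ← Finset.sum_div, ← Finset.mul_sum]
  simp
  ring

lemma rj_cost {N : ℕ} (hN : N ≠ 0) (t : ℝ) (c j : Fin N) :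
    ∑ a, ∑ b, rj N t c a b * |(if a = j then (1 : ℝ) else 0) - (if b = j then 1 else 0)|
      ≤ Real.exp (-t) * ((if c = j then 1 else 0) + 1 / N) := by
  have h : ∀ a b, rj N t c a b * |(if a = j then (1 : ℝ) else 0) - (if b = j then 1 else 0)|
      ≤ Real.exp (-t) / N * ((if c = a then 1 else 0) *
        ((if a = j then (1 : ℝ) else 0) + (if b = j then 1 else 0))) := by
    intro a b
    have e : rj N t c a b * |(if a = j then (1 : ℝ) else 0) - (if b = j then 1 else 0)|
        = Real.exp (-t) / N * ((if c = a then 1 else 0) *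
          |(if a = j then (1 : ℝ) else 0) - (if b = j then 1 else 0)|) := by
      unfold rj
      by_cases hab : a = b
      · subst hab; simp
      · simp only [hab, if_false]; ring
    rw [e]
    have := (Real.exp_pos (-t)).le
    have h1 : (0 : ℝ) ≤ (if c = a then 1 else 0) := by split_ifs <;> norm_num
    gcongr
    split_ifs <;> norm_num
  refine (Finset.sum_le_sum fun a _ => Finset.sum_le_sum fun b _ => h a b).trans ?_
  simp_rw [← Finset.mul_sum, Finset.sum_add_distrib]
  simp
  apply le_of_eq
  have : (N : ℝ) ≠ 0 := by exact_mod_cast hN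
  split_ifs <;> field_simp <;> ring

/-- Coupling of all labelled dollars. -/
def Rt {n N : ℕ} (t : ℝ) (c₀ x u : Fin n → Fin N) : ℝ := ∏ m, rj N t (c₀ m) (x m) (u m)

lemma Rt_nonneg {n N : ℕ} {t : ℝ} (ht : 0 ≤ t) (c₀ x u : Fin n → Fin N) : 0 ≤ Rt t c₀ x u :=
  Finset.prod_nonneg fun _ _ => rj_nonneg ht _ _ _

lemma Rt_sum_u {n N : ℕ} (hN : N ≠ 0) (t : ℝ) (c₀ x : Fin n → Fin N) :
    ∑ u, Rt t c₀ x u = pt t c₀ x := by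
  unfold Rt pt
  rw [← Fintype.prod_sum (fun m b => rj N t (c₀ m) (x m) b)]
  exact Finset.prod_congr rfl fun m _ => rj_sum_u hN _ _ _

lemma Rt_sum_x {n N : ℕ} (t : ℝ) (c₀ u : Fin n → Fin N) :
    ∑ x, Rt t c₀ x u = (1 / N) ^ n := by
  unfold Rt
  rw [← Fintype.prod_sum (fun m b => rj N t (c₀ m) b (u m))]
  simp [rj_sum_x]

lemma Rt_marg {n N : ℕ} (hN : N ≠ 0) (t : ℝ) (c₀ : Fin n → Fin N) (m : Fin n)
    (d : Fin N → Fin N → ℝ) :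
    ∑ x, ∑ u, Rt t c₀ x u * d (x m) (u m) = ∑ a, ∑ b, rj N t (c₀ m) a b * d a b := by
  let g : Fin n → Fin N → Fin N → ℝ := fun l a b =>
    rj N t (c₀ l) a b * (if l = m then d a b else 1)
  have h : ∀ x u : Fin n → Fin N, Rt t c₀ x u * d (x m) (u m) = ∏ l, g l (x l) (u l) := by
    intro x u
    simp only [g, Finset.prod_mul_distrib, Rt, Finset.prod_ite_eq', Finset.mem_univ, if_true]
  simp_rw [h]
  have h2 : ∀ x : Fin n → Fin N, ∑ u : Fin n → Fin N, ∏ l, g l (x l) (u l)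
      = ∏ l, ∑ b, g l (x l) b := fun x => (Fintype.prod_sum (fun l b => g l (x l) b)).symm
  simp_rw [h2]
  rw [← Fintype.prod_sum (fun l a => ∑ b, g l a b), Finset.prod_eq_single m]
  · simp [g]
  · intro l _ hl
    simp only [g, hl, if_false, mul_one]
    simp_rw [rj_sum_u hN, qt_sum hN]
  · simp

lemma Rt_cost {n N : ℕ} (hN : N ≠ 0) {t : ℝ} (ht : 0 ≤ t) (c₀ : Fin n → Fin N) (j : Fin N) :
    ∑ x, ∑ u, Rt t c₀ x u * |(cnt x j : ℝ) - cnt u j|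
      ≤ Real.exp (-t) * (cnt c₀ j + n / N) := by
  have h : ∀ x u : Fin n → Fin N, Rt t c₀ x u * |(cnt x j : ℝ) - cnt u j|
      ≤ ∑ m, Rt t c₀ x u *
        |(if x m = j then (1 : ℝ) else 0) - (if u m = j then 1 else 0)| := by
    intro x u
    rw [← Finset.mul_sum]
    refine mul_le_mul_of_nonneg_left ?_ (Rt_nonneg ht _ _ _)
    unfold cnt
    push_cast
    rw [← Finset.sum_sub_distrib]
    exact Finset.abs_sum_le_sum_abs _ _
  refine (Finset.sum_le_sum fun x _ => Finset.sum_le_sum fun u _ => h x u).trans ?_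
  simp_rw [Finset.sum_comm (t := (Finset.univ : Finset (Fin n)))]
  have h2 := fun m => Rt_marg hN t c₀ m (fun a b =>
    |(if a = j then (1 : ℝ) else 0) - (if b = j then 1 else 0)|)
  simp_rw [h2]
  refine (Finset.sum_le_sum fun m _ => rj_cost hN t (c₀ m) j).trans ?_
  rw [← Finset.mul_sum, Finset.sum_add_distrib]
  apply le_of_eq
  unfold cnt
  push_cast
  simp
  ring

lemma exists_weight {n N : ℕ} (p : (Fin N → ℕ) → ℝ) (hp : ∀ S, 0 ≤ p S)
    (hp0 : ∀ S, ∑ i, S i ≠ n → p S = 0) :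
    ∃ w : (Fin n → Fin N) → ℝ, (∀ c, 0 ≤ w c) ∧
      ∀ S, ∑ c, w c * (if cnt c = S then 1 else 0) = p S := by
  refine ⟨fun c => p (cnt c) / (Finset.univ.filter (fun c' : Fin n → Fin N => cnt c' = cnt c)).card,
    fun c => div_nonneg (hp _) (by positivity), fun S => ?_⟩
  have h : ∀ c : Fin n → Fin N, p (cnt c) /
      (Finset.univ.filter (fun c' : Fin n → Fin N => cnt c' = cnt c)).card
        * (if cnt c = S then (1 : ℝ) else 0)
      = (p S / (Finset.univ.filter (fun c' : Fin n → Fin N => cnt c' = S)).card)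
        * (if cnt c = S then (1 : ℝ) else 0) := by
    intro c
    split_ifs with h
    · rw [h]
    · simp
  simp_rw [h]
  rw [← Finset.mul_sum, Finset.sum_boole]
  by_cases hS : ∑ i, S i = n
  · have h1 := card_cnt S hS
    have h2 : (Finset.univ.filter (fun c' : Fin n → Fin N => cnt c' = S)).card ≠ 0 := by
      intro h0
      rw [h0, mul_zero] at h1
      exact (Nat.factorial_pos n).ne h1
    have h3 : ((Finset.univ.filter (fun c' : Fin n → Fin N => cnt c' = S)).card : ℝ) ≠ 0 := by
      exact_mod_cast h2
    field_simp
  · simp [hp0 S hS]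

lemma diracs_singleton {Ω α : Type*} [Fintype Ω] [DecidableEq α] [MeasurableSpace α]
    [MeasurableSingletonClass α]
    (wt : Ω → ℝ) (hw : ∀ ω, 0 ≤ wt ω) (f : Ω → α) (S : α) :
    (∑ ω, ENNReal.ofReal (wt ω) • Measure.dirac (f ω)) {S}
      = ENNReal.ofReal (∑ ω, wt ω * (if f ω = S then 1 else 0)) := by
  rw [ENNReal.ofReal_sum_of_nonneg (fun ω _ => mul_nonneg (hw ω) (by split_ifs <;> norm_num))]
  simp only [Measure.coe_finsetSum, Finset.sum_apply, Measure.smul_apply, smul_eq_mul]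
  refine Finset.sum_congr rfl fun ω _ => ?_
  rw [Measure.dirac_apply' _ (measurableSet_singleton S)]
  by_cases h : f ω = S <;> simp [h]

lemma diracs_map {Ω α β : Type*} [Fintype Ω] [MeasurableSpace α] [MeasurableSpace β]
    (wt : Ω → ℝ≥0∞) (f : Ω → α) (g : α → β) (hg : Measurable g) :
    (∑ ω, wt ω • Measure.dirac (f ω)).map g = ∑ ω, wt ω • Measure.dirac (g (f ω)) := by
  rw [Measure.map_finset_sum hg.aemeasurable]
  refine Finset.sum_congr rfl fun ω _ => ?_
  rw [Measure.map_smul, Measure.map_dirac' hg]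

lemma mean_exch {N n : ℕ} (hN : N ≠ 0) (p : (Fin N → ℕ) → ℝ)
    (hex : ∀ (σ : Equiv.Perm (Fin N)) S, p (S ∘ σ) = p S)
    (h1 : ∑ S ∈ Finset.piAntidiag (Finset.univ : Finset (Fin N)) n, p S = 1) (j : Fin N) :
    ∑ S ∈ Finset.piAntidiag (Finset.univ : Finset (Fin N)) n, p S * (S j : ℝ) = n / N := by
  set E : Fin N → ℝ := fun j =>
    ∑ S ∈ Finset.piAntidiag (Finset.univ : Finset (Fin N)) n, p S * (S j : ℝ) with hE
  have hsym : ∀ i, E i = E j := by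
    intro i
    refine Finset.sum_nbij' (fun S => S ∘ Equiv.swap i j) (fun S => S ∘ Equiv.swap i j)
      ?_ ?_ ?_ ?_ ?_
    · intro S hS
      simp only [Finset.mem_piAntidiag, Finset.mem_univ, implies_true, and_true] at hS ⊢
      rw [← hS]; exact Equiv.sum_comp (Equiv.swap i j) S
    · intro S hS
      simp only [Finset.mem_piAntidiag, Finset.mem_univ, implies_true, and_true] at hS ⊢
      rw [← hS]; exact Equiv.sum_comp (Equiv.swap i j) S
    · intro S _; ext l; simp
    · intro S _; ext l; simp
    · intro S _; simp [hex]
  have hsum : ∑ i, E i = n := by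
    simp only [hE]
    rw [Finset.sum_comm]
    calc _ = ∑ S ∈ Finset.piAntidiag (Finset.univ : Finset (Fin N)) n, p S * (n : ℝ) := by
          refine Finset.sum_congr rfl fun S hS => ?_
          simp only [Finset.mem_piAntidiag, Finset.mem_univ, implies_true, and_true] at hS
          rw [← Finset.mul_sum, ← Nat.cast_sum, hS]
      _ = n := by rw [← Finset.sum_mul, h1, one_mul]
  rw [Finset.sum_congr rfl (fun i _ => hsym i)] at hsum
  simp only [Finset.sum_const, Finset.card_univ, Fintype.card_fin, nsmul_eq_mul] at hsum
  have : (N : ℝ) ≠ 0 := by exact_mod_cast hN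
  change E j = _
  field_simp
  linarith

lemma weight_sum {n N : ℕ} (p : (Fin N → ℕ) → ℝ) (w : (Fin n → Fin N) → ℝ)
    (hw : ∀ S, ∑ c, w c * (if cnt c = S then 1 else 0) = p S) (g : (Fin N → ℕ) → ℝ) :
    ∑ c, w c * g (cnt c) = ∑ S ∈ Finset.piAntidiag (Finset.univ : Finset (Fin N)) n, p S * g S := by
  simp_rw [← hw, Finset.sum_mul]
  rw [Finset.sum_comm]
  refine Finset.sum_congr rfl fun c _ => ?_
  rw [Finset.sum_eq_single (cnt c)]
  · simp
  · intro S _ hS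
    simp [hS.symm]
  · intro h
    exact absurd (by simp [sum_cnt]) h

lemma MN_singleton (N μ : ℕ) (S : Fin N → ℕ) :
    MNmeas N μ {S} = ENNReal.ofReal (∑ u : Fin (N * μ) → Fin N,
      (1 / (N : ℝ)) ^ (N * μ) * (if cnt u = S then 1 else 0)) := by
  unfold MNmeas
  rw [Measure.sum_smul_dirac_singleton, ← Finset.mul_sum, Finset.sum_boole]
  split_ifs with h
  · congr 1
    have h1 := card_cnt S h
    rw [← h1]
    have h2 : ((∏ i, (S i).factorial : ℕ) : ℝ) ≠ 0 := by
      exact_mod_cast (Finset.prod_pos fun i _ => Nat.factorial_pos _).ne'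
    push_cast at h2 ⊢
    rw [mul_div_mul_left _ _ h2]
    rw [one_div, inv_pow]
    ring
  · rw [Finset.filter_eq_empty_iff.2]
    · simp
    · rintro u - rfl
      exact h (sum_cnt u)

lemma W1_le_of_coupling {d : ℕ} {π₁ π₂ : Measure (Fin d → ℕ)} {r : ℝ≥0∞}
    (π : Measure ((Fin d → ℕ) × (Fin d → ℕ))) (h1 : π.map Prod.fst = π₁)
    (h2 : π.map Prod.snd = π₂)
    (h : ∫⁻ z, (∑ j : Fin d, (Nat.dist (z.1 j) (z.2 j) : ℝ≥0∞)) / (d : ℝ≥0∞) ∂π ≤ r) :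
    W1 d π₁ π₂ ≤ r :=
  (iInf_le_of_le π (iInf_le_of_le h1 (iInf_le _ h2))).trans h

lemma natDist_cast (a b : ℕ) : ((Nat.dist a b : ℕ) : ℝ) = |(a : ℝ) - b| := by
  rcases le_total a b with h | h
  · rw [Nat.dist_eq_sub_of_le h, Nat.cast_sub h, abs_of_nonpos] <;> simp [h]
  · rw [Nat.dist_eq_sub_of_le_right h, Nat.cast_sub h, abs_of_nonneg]
    simp [h]

lemma W1_diracs_le {Ω : Type*} [Fintype Ω] {k : ℕ} (hk1 : 1 ≤ k) (wt : Ω → ℝ)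
    (hwt : ∀ ω, 0 ≤ wt ω) (X U : Ω → (Fin k → ℕ)) :
    W1 k (∑ ω, ENNReal.ofReal (wt ω) • Measure.dirac (X ω))
        (∑ ω, ENNReal.ofReal (wt ω) • Measure.dirac (U ω))
      ≤ ENNReal.ofReal (∑ ω, wt ω * ((∑ j : Fin k, |(X ω j : ℝ) - U ω j|) / k)) := by
  refine W1_le_of_coupling (∑ ω, ENNReal.ofReal (wt ω) • Measure.dirac (X ω, U ω))
    (diracs_map (fun ω => ENNReal.ofReal (wt ω)) (fun ω => (X ω, U ω)) _ measurable_fst)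
    (diracs_map (fun ω => ENNReal.ofReal (wt ω)) (fun ω => (X ω, U ω)) _ measurable_snd) ?_
  rw [lintegral_finsetSum_measure]
  simp only [lintegral_smul_measure, lintegral_dirac, smul_eq_mul]
  have hk0 : (0 : ℝ) < k := by exact_mod_cast hk1
  rw [ENNReal.ofReal_sum_of_nonneg (fun ω _ => mul_nonneg (hwt ω)
    (div_nonneg (Finset.sum_nonneg fun _ _ => abs_nonneg _) hk0.le))]
  refine Finset.sum_le_sum fun ω _ => le_of_eq ?_
  rw [ENNReal.ofReal_mul (hwt ω), ENNReal.ofReal_div_of_pos hk0, ENNReal.ofReal_natCast,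
    ENNReal.ofReal_sum_of_nonneg (fun _ _ => abs_nonneg _)]
  congr 2
  refine Finset.sum_congr rfl fun j _ => ?_
  rw [← ENNReal.ofReal_natCast, natDist_cast]

/-- Equilibration of the `k`-particle marginals towards those of the multinomial
distribution: if `P_0` is supported on `𝒜_{N,μ}` and exchangeable, then
`W₁(π_k(P_t), M_{N,k}) ≤ 2 μ e^{-t}`. -/
theorem convergence_to_multinomial_marginals (N μ k : ℕ) (hN : 2 ≤ N) (hμ : 1 ≤ μ)
    (hk1 : 1 ≤ k) (hk : k ≤ N)
    (P : ℝ → Measure (Fin N → ℕ)) (hP : IsMasterSolution P)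
    (hP0 : P 0 ({S : Fin N → ℕ | ∑ i, S i = N * μ}ᶜ) = 0)
    (hexch : ∀ σ : Equiv.Perm (Fin N), (P 0).map (fun S => S ∘ σ) = P 0) :
    ∀ t ∈ Set.Ici (0 : ℝ),
      W1 k (marginal k hk (P t)) (marginal k hk (MNmeas N μ))
        ≤ ENNReal.ofReal (2 * μ * Real.exp (-t)) := by
  intro t ht
  have ht0 : (0 : ℝ) ≤ t := ht
  have hN0 : N ≠ 0 := by omega
  have := hP.1 0 (Set.mem_Ici.2 le_rfl)
  have := hP.1 t ht
  set p : (Fin N → ℕ) → ℝ := fun S => (P 0 {S}).toReal with hp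
  have hp0 : ∀ S, ∑ i, S i ≠ N * μ → p S = 0 := by
    intro S hS
    have : P 0 {S} = 0 := measure_mono_null (by simpa using hS) hP0
    simp [hp, this]
  obtain ⟨w, hw0, hw⟩ := exists_weight (n := N * μ) p (fun S => ENNReal.toReal_nonneg) hp0
  have hex : ∀ (σ : Equiv.Perm (Fin N)) S, p (S ∘ σ) = p S := by
    intro σ S
    simp only [hp]
    congr 1
    conv_lhs => rw [← hexch σ]
    rw [Measure.map_apply (by fun_prop) (measurableSet_singleton _)]
    congr 1
    ext T
    simp only [Set.mem_preimage, Set.mem_singleton_iff]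
    constructor
    · intro h
      ext l
      have := congrFun h (σ.symm l)
      simpa using this
    · rintro rfl; rfl
  have hmass : ∑ S ∈ Finset.piAntidiag (Finset.univ : Finset (Fin N)) (N * μ), p S = 1 := by
    have h1 : (P 0).real (Finset.piAntidiag (Finset.univ : Finset (Fin N)) (N * μ) :
        Set (Fin N → ℕ)) = 1 := by
      rw [← probReal_univ (μ := P 0)]
      refine measureReal_congr ?_
      rw [Filter.eventuallyEq_univ, mem_ae_iff]
      refine measure_mono_null ?_ hP0
      intro S hS
      simpa using hS
    rw [← h1, ← sum_measureReal_singleton]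
    rfl
  have hwsum : ∑ c, w c = 1 := by
    have := weight_sum p w hw (fun _ => 1)
    simpa [hmass] using this
  have hwmean : ∀ j, ∑ c, w c * (cnt c j : ℝ) = μ := by
    intro j
    rw [weight_sum p w hw (fun S => (S j : ℝ)), mean_exch hN0 p hex hmass]
    have : (N : ℝ) ≠ 0 := by exact_mod_cast hN0
    push_cast
    field_simp
  have hPQ : ∀ S, (P t {S}).toReal = Qt w t S := by
    intro S
    refine rhsF_unique (fun s S => (P s {S}).toReal) (Qt w) hP.2
      (fun S s _ => (Qt_deriv hN0 w s S).hasDerivWithinAt) ?_ t ht0 S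
    intro S
    rw [Qt_zero, hw]
  let Ω := (Fin (N * μ) → Fin N) × (Fin (N * μ) → Fin N) × (Fin (N * μ) → Fin N)
  let wt : Ω → ℝ := fun ω => w ω.1 * Rt t ω.1 ω.2.1 ω.2.2
  have hwt : ∀ ω, 0 ≤ wt ω := fun ω => mul_nonneg (hw0 _) (Rt_nonneg ht0 _ _ _)
  have hX : P t = ∑ ω : Ω, ENNReal.ofReal (wt ω) • Measure.dirac (cnt ω.2.1) := by
    refine Measure.ext_of_singleton fun S => ?_
    rw [diracs_singleton wt hwt, ← ENNReal.ofReal_toReal (measure_ne_top (P t) {S}), hPQ]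
    congr 1
    simp only [Ω, wt, Qt, Fintype.sum_prod_type]
    rw [Finset.sum_comm]
    refine Finset.sum_congr rfl fun x _ => ?_
    rw [Finset.sum_mul]
    refine Finset.sum_congr rfl fun c₀ _ => ?_
    rw [← Rt_sum_u hN0, Finset.mul_sum, Finset.sum_mul]
  have hU : MNmeas N μ = ∑ ω : Ω, ENNReal.ofReal (wt ω) • Measure.dirac (cnt ω.2.2) := by
    refine Measure.ext_of_singleton fun S => ?_
    rw [diracs_singleton wt hwt, MN_singleton]
    congr 1
    simp only [Ω, wt, Fintype.sum_prod_type]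
    calc _ = ∑ c₀, w c₀ * ∑ u : Fin (N * μ) → Fin N,
          (1 / (N : ℝ)) ^ (N * μ) * (if cnt u = S then 1 else 0) := by
          rw [← Finset.sum_mul, hwsum, one_mul]
      _ = _ := by
          refine Finset.sum_congr rfl fun c₀ _ => ?_
          rw [Finset.sum_comm, Finset.mul_sum]
          refine Finset.sum_congr rfl fun u _ => ?_
          rw [← mul_assoc, ← Rt_sum_x t c₀ u, Finset.mul_sum, Finset.sum_mul]
  let pr : (Fin N → ℕ) → (Fin k → ℕ) := fun S => fun i : Fin k => S (Fin.castLE hk i)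
  have hpr : Measurable pr := by fun_prop
  have hX' : marginal k hk (P t)
      = ∑ ω : Ω, ENNReal.ofReal (wt ω) • Measure.dirac (pr (cnt ω.2.1)) := by
    rw [hX]
    exact diracs_map (fun ω : Ω => ENNReal.ofReal (wt ω)) (fun ω : Ω => cnt ω.2.1) pr hpr
  have hU' : marginal k hk (MNmeas N μ)
      = ∑ ω : Ω, ENNReal.ofReal (wt ω) • Measure.dirac (pr (cnt ω.2.2)) := by
    rw [hU]
    exact diracs_map (fun ω : Ω => ENNReal.ofReal (wt ω)) (fun ω : Ω => cnt ω.2.2) pr hpr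
  have hk0 : (0 : ℝ) < k := by exact_mod_cast hk1
  rw [hX', hU']
  refine (W1_diracs_le hk1 wt hwt (fun ω : Ω => pr (cnt ω.2.1))
    (fun ω : Ω => pr (cnt ω.2.2))).trans ?_
  refine ENNReal.ofReal_le_ofReal ?_
  have hj : ∀ j : Fin N, ∑ ω : Ω, wt ω * |(cnt ω.2.1 j : ℝ) - cnt ω.2.2 j|
      ≤ 2 * μ * Real.exp (-t) := by
    intro j
    simp only [Ω, wt, Fintype.sum_prod_type, mul_assoc]
    simp_rw [← Finset.mul_sum]
    refine (Finset.sum_le_sum fun c₀ _ =>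
      mul_le_mul_of_nonneg_left (Rt_cost hN0 ht0 c₀ j) (hw0 c₀)).trans ?_
    have e : ∀ c₀ : Fin (N * μ) → Fin N,
        w c₀ * (Real.exp (-t) * (cnt c₀ j + ((N * μ : ℕ) : ℝ) / N))
        = Real.exp (-t) * (w c₀ * cnt c₀ j) + Real.exp (-t) * μ * w c₀ := by
      intro c₀
      have : (N : ℝ) ≠ 0 := by exact_mod_cast hN0
      push_cast
      field_simp
    rw [Finset.sum_congr rfl (fun c₀ _ => e c₀), Finset.sum_add_distrib, ← Finset.mul_sum,
      ← Finset.mul_sum, hwmean, hwsum]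
    apply le_of_eq
    ring
  calc _ = (∑ j : Fin k, ∑ ω : Ω, wt ω *
        |(cnt ω.2.1 (Fin.castLE hk j) : ℝ) - cnt ω.2.2 (Fin.castLE hk j)|) / k := by
        rw [Finset.sum_comm, Finset.sum_div]
        refine Finset.sum_congr rfl fun ω _ => ?_
        rw [← Finset.mul_sum, mul_div_assoc]
    _ ≤ (∑ _j : Fin k, 2 * μ * Real.exp (-t)) / k := by
        gcongr with j _
        exact hj _
    _ = 2 * μ * Real.exp (-t) := by
        simp only [Finset.sum_const, Finset.card_univ, Fintype.card_fin, nsmul_eq_mul]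
        field_simp

end
end
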